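/- If Y is a uniformly convex Banach space, then the pair (c0(⊕_{n=1}^∞ ℓ2^n), Y) has the Bishop-Phelps-Bollobás property for operators. -/

import Mathlib

open Filter Topology

noncomputable section

/-- The Euclidean space `ℓ₂ⁿ⁺¹` forming the `n`-th block (so blocks have dimensions 1, 2, 3, …),
i.e. the block `I(n+1)` of the paper. -/
abbrev E2 (n : ℕ) : Type := EuclideanSpace ℝ (Fin (n + 1))

/-- `c₀(⊕ₙ ℓ₂ⁿ)`: the subspace of the `ℓ∞`-sum of the spaces `ℓ₂ⁿ` consisting of those
elements whose block norms tend to `0`; it carries the norm `‖x‖ = sup_n ‖x n‖`. -/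
def c0E2 : Submodule ℝ (lp E2 ⊤) where
  carrier := {x | Tendsto (fun n => ‖x n‖) atTop (𝓝 0)}
  add_mem' := by
    intro x y hx hy
    refine squeeze_zero (fun n => norm_nonneg _) (fun n => ?_) (by simpa using hx.add hy)
    rw [lp.coeFn_add]
    exact norm_add_le _ _
  zero_mem' := by
    simp only [Set.mem_setOf_eq, lp.coeFn_zero, Pi.zero_apply, norm_zero]
    exact tendsto_const_nhds
  smul_mem' := by
    intro c x hx
    have h : ∀ n, ‖(c • x : lp E2 ⊤) n‖ = ‖c‖ * ‖x n‖ := by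
      intro n; rw [lp.coeFn_smul]; simp [norm_smul]
    have := hx.const_mul ‖c‖
    simp only [mul_zero] at this
    exact Tendsto.congr (fun n => (h n).symm) this

/-- The standard unit basis vector of `c₀(⊕ₙ ℓ₂ⁿ)` sitting in block `j` at coordinate `i`. -/
def stdBasis (j : ℕ) (i : Fin (j + 1)) : c0E2 :=
  ⟨lp.single ⊤ j (EuclideanSpace.single i 1), by
    refine Tendsto.congr' ?_ (tendsto_const_nhds : Tendsto (fun _ : ℕ => (0:ℝ)) atTop (𝓝 0))
    filter_upwards [eventually_gt_atTop j] with n hn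
    rw [lp.single_apply_ne ⊤ j _ (by omega : n ≠ j), norm_zero]⟩

/-- A pair `(X, Y)` of normed spaces has the **Bishop–Phelps–Bollobás property for operators**:
for every `ε > 0` there is `η > 0` such that whenever a norm-one operator `T : X → Y` and a
norm-one vector `x₀` satisfy `‖T x₀‖ > 1 - η`, there are a norm-one vector `u₀` and a norm-one
operator `S` with `‖S u₀‖ = 1`, `‖u₀ - x₀‖ < ε` and `‖S - T‖ < ε`. -/
def HasBPBp (X Y : Type*) [NormedAddCommGroup X] [NormedSpace ℝ X]
    [NormedAddCommGroup Y] [NormedSpace ℝ Y] : Prop :=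
  ∀ ε : ℝ, 0 < ε → ∃ η : ℝ, 0 < η ∧
    ∀ (T : X →L[ℝ] Y) (x₀ : X), ‖T‖ = 1 → ‖x₀‖ = 1 → 1 - η < ‖T x₀‖ →
      ∃ (u₀ : X) (S : X →L[ℝ] Y),
        ‖u₀‖ = 1 ∧ ‖S‖ = 1 ∧ ‖S u₀‖ = 1 ∧ ‖u₀ - x₀‖ < ε ∧ ‖S - T‖ < ε


namespace C0Aux

/-- Evaluation at block `j`. -/
def ev (j : ℕ) : c0E2 →ₗ[ℝ] E2 j where
  toFun x := x.1 j
  map_add' x y := by simp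
  map_smul' c x := by simp

lemma norm_ev_le (x : c0E2) (j : ℕ) : ‖ev j x‖ ≤ ‖x‖ :=
  lp.norm_apply_le_norm ENNReal.top_ne_zero x.1 j

lemma norm_le_of (x : c0E2) {C : ℝ} (hC : 0 ≤ C) (h : ∀ j, ‖ev j x‖ ≤ C) : ‖x‖ ≤ C :=
  lp.norm_le_of_forall_le hC h

lemma ext_ev {x y : c0E2} (h : ∀ j, ev j x = ev j y) : x = y := by
  apply Subtype.ext
  apply lp.ext
  funext j
  exact h j

lemma tendsto_ev (x : c0E2) : Tendsto (fun n => ‖ev n x‖) atTop (𝓝 0) := x.2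

/-- Build an element from its blocks. -/
def mk (f : ∀ j, E2 j) (hf : Tendsto (fun n => ‖f n‖) atTop (𝓝 0)) : c0E2 :=
  ⟨⟨f, memℓp_infty hf.bddAbove_range⟩, hf⟩

@[simp] lemma ev_mk (f : ∀ j, E2 j) (hf : Tendsto (fun n => ‖f n‖) atTop (𝓝 0)) (j : ℕ) :
    ev j (mk f hf) = f j := rfl

/-- Block diagonal linear map. -/
def diagL (L : ∀ j, E2 j →ₗ[ℝ] E2 j) (hL : ∀ j w, ‖L j w‖ ≤ ‖w‖) : c0E2 →ₗ[ℝ] c0E2 where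
  toFun x := mk (fun j => L j (ev j x))
    (squeeze_zero (fun _ => norm_nonneg _) (fun j => hL j _) (tendsto_ev x))
  map_add' x y := ext_ev fun j => by
    rw [map_add]; simp only [ev_mk, map_add]
  map_smul' c x := ext_ev fun j => by
    rw [map_smul]; simp only [ev_mk, map_smul, RingHom.id_apply]

lemma ev_diagL (L : ∀ j, E2 j →ₗ[ℝ] E2 j) (hL : ∀ j w, ‖L j w‖ ≤ ‖w‖) (x : c0E2)
    (j : ℕ) : ev j (diagL L hL x) = L j (ev j x) := rfl

lemma norm_diagL_le (L : ∀ j, E2 j →ₗ[ℝ] E2 j) (hL : ∀ j w, ‖L j w‖ ≤ ‖w‖) (x : c0E2) :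
    ‖diagL L hL x‖ ≤ ‖x‖ := by
  refine norm_le_of _ (norm_nonneg _) fun j => ?_
  rw [ev_diagL]
  exact (hL j (ev j x)).trans (norm_ev_le x j)

/-- Block diagonal operator. -/
def diag (L : ∀ j, E2 j →ₗ[ℝ] E2 j) (hL : ∀ j w, ‖L j w‖ ≤ ‖w‖) : c0E2 →L[ℝ] c0E2 :=
  LinearMap.mkContinuous (diagL L hL) 1 (fun x => by
    rw [one_mul]
    exact norm_diagL_le L hL x)

lemma ev_diag (L : ∀ j, E2 j →ₗ[ℝ] E2 j) (hL : ∀ j w, ‖L j w‖ ≤ ‖w‖) (x : c0E2)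
    (j : ℕ) : ev j (diag L hL x) = L j (ev j x) := rfl

lemma norm_diag_le (L : ∀ j, E2 j →ₗ[ℝ] E2 j) (hL : ∀ j w, ‖L j w‖ ≤ ‖w‖) (x : c0E2) :
    ‖diag L hL x‖ ≤ ‖x‖ := norm_diagL_le L hL x

/-- Inclusion of block `i`. -/
def inc (i : ℕ) : E2 i →ₗ[ℝ] c0E2 where
  toFun w := mk (Pi.single i w) (by
    refine Tendsto.congr' ?_ (tendsto_const_nhds : Tendsto (fun _ : ℕ => (0:ℝ)) atTop (𝓝 0))
    filter_upwards [eventually_gt_atTop i] with n hn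
    rw [Pi.single_eq_of_ne (by omega : n ≠ i), norm_zero])
  map_add' x y := ext_ev fun j => by simp [Pi.single_add]
  map_smul' c x := ext_ev fun j => by simp [Pi.single_smul]

lemma ev_inc (i : ℕ) (w : E2 i) (j : ℕ) : ev j (inc i w) = (Pi.single i w : ∀ j, E2 j) j := rfl

lemma inc_cont (i : ℕ) : Continuous (inc i) := LinearMap.continuous_of_finiteDimensional _

lemma ev_sum_inc (A : Finset ℕ) (w : ∀ j, E2 j) (j : ℕ) :
    ev j (∑ i ∈ A, inc i (w i)) = if j ∈ A then w j else 0 := by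
  rw [map_sum]
  simp only [ev_inc]
  exact Finset.sum_pi_single j w A

lemma exists_max {Y : Type*} [NormedAddCommGroup Y] [NormedSpace ℝ Y] (A : Finset ℕ)
    (T : c0E2 →L[ℝ] Y) :
    ∃ z : c0E2, ‖z‖ ≤ 1 ∧ (∀ j ∉ A, ev j z = 0) ∧
      ∀ x : c0E2, ‖x‖ ≤ 1 → (∀ j ∉ A, ev j x = 0) → ‖T x‖ ≤ ‖T z‖ := by
  have hK : IsCompact (Set.pi Set.univ fun j : ℕ => Metric.closedBall (0 : E2 j) 1) :=
    isCompact_univ_pi fun j => isCompact_closedBall _ _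
  have hc : Continuous fun w : ∀ j, E2 j => ‖T (∑ i ∈ A, inc i (w i))‖ := by
    refine (T.continuous.comp ?_).norm
    exact continuous_finsetSum _ fun i _ => (inc_cont i).comp (continuous_apply i)
  obtain ⟨w, hw, hmax⟩ := hK.exists_isMaxOn ⟨fun _ => 0, by simp⟩ hc.continuousOn
  refine ⟨∑ i ∈ A, inc i (w i), ?_, ?_, ?_⟩
  · refine norm_le_of _ zero_le_one fun j => ?_
    rw [ev_sum_inc]
    split_ifs
    · simpa using hw j (Set.mem_univ j)
    · simp
  · intro j hj
    rw [ev_sum_inc, if_neg hj]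
  · intro x hx hxA
    have h1 : x = ∑ i ∈ A, inc i (ev i x) := by
      apply ext_ev
      intro j
      rw [ev_sum_inc]
      split_ifs with h
      · rfl
      · exact hxA j h
    have h2 := hmax (a := fun j => ev j x) (fun j _ => by
      simpa using (norm_ev_le x j).trans hx)
    rw [h1]
    exact h2

lemma key (Y : Type*) [NormedAddCommGroup Y] [NormedSpace ℝ Y] [UniformConvexSpace Y]
    {τ b : ℝ} (hτ : 0 < τ) (hb : 0 < b) :
    ∃ δ : ℝ, 0 < δ ∧ ∀ (T : c0E2 →L[ℝ] Y) (x : c0E2), ‖T‖ ≤ 1 → ‖x‖ ≤ 1 → 1 - δ < ‖T x‖ →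
      ∀ y : c0E2, (∀ i, 1 - τ ≤ ‖ev i x‖ → ev i y = 0) → ‖T y‖ ≤ b * ‖y‖ := by
  obtain ⟨δ, hδ, H⟩ := exists_forall_closed_ball_dist_add_le_two_sub Y
    (show 0 < 2 * (τ * b) by positivity)
  refine ⟨δ / 2, by positivity, fun T x hT hx hTx y hy => ?_⟩
  by_contra hcon
  push Not at hcon
  have hy0 : 0 < ‖y‖ := by
    rw [norm_pos_iff]
    rintro rfl
    simp at hcon
  set c : ℝ := τ / ‖y‖ with hc
  have hc0 : 0 < c := by positivity
  have hcy : c * ‖y‖ = τ := by rw [hc]; field_simp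
  have hball : ∀ s : ℝ, |s| = c → ‖x + s • y‖ ≤ 1 := by
    intro s hs
    refine norm_le_of _ zero_le_one fun j => ?_
    rw [map_add, map_smul]
    by_cases hj : 1 - τ ≤ ‖ev j x‖
    · rw [hy j hj, smul_zero, add_zero]
      exact (norm_ev_le x j).trans hx
    · push Not at hj
      refine (norm_add_le _ _).trans ?_
      rw [norm_smul, Real.norm_eq_abs, hs]
      have := mul_le_mul_of_nonneg_left (norm_ev_le y j) hc0.le
      linarith
  have hTb : ∀ v : c0E2, ‖v‖ ≤ 1 → ‖T v‖ ≤ 1 := fun v hv => by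
    have := T.le_of_opNorm_le hT v
    linarith
  have h1 := hTb _ (hball c (abs_of_pos hc0))
  have h2 := hTb _ (hball (-c) (by rw [abs_neg, abs_of_pos hc0]))
  have e1 : T (x + c • y) - T (x + (-c) • y) = (2 * c) • T y := by
    simp only [map_add, map_smul]; module
  have e2 : T (x + c • y) + T (x + (-c) • y) = (2 : ℝ) • T x := by
    simp only [map_add, map_smul]; module
  have h3 := H h1 h2 (by
    rw [e1, norm_smul, Real.norm_eq_abs, abs_of_pos (by positivity)]
    have := mul_lt_mul_of_pos_left hcon hc0
    nlinarith)
  rw [e2, norm_smul] at h3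
  norm_num at h3
  linarith

/-- Coordinate projection onto the blocks of `A`. -/
def proj (A : Finset ℕ) : c0E2 →L[ℝ] c0E2 :=
  diag (fun j => if j ∈ A then LinearMap.id else 0) (fun j w => by split_ifs <;> simp)

lemma ev_proj (A : Finset ℕ) (x : c0E2) (j : ℕ) :
    ev j (proj A x) = if j ∈ A then ev j x else 0 := by
  rw [proj, ev_diag]
  split_ifs <;> simp

lemma norm_proj_le (A : Finset ℕ) (x : c0E2) : ‖proj A x‖ ≤ ‖x‖ := norm_diag_le _ _ _

/-- The contraction sending `u i` to `z i` on the blocks in `B`. -/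
def rot (A : Finset ℕ) (B : Set ℕ) [DecidablePred (· ∈ B)] (u z : ∀ j, E2 j)
    (hu : ∀ j, ‖u j‖ ≤ 1) (hz : ∀ j, ‖z j‖ ≤ 1) : c0E2 →L[ℝ] c0E2 :=
  diag (fun j => if j ∈ A then
      (if j ∈ B then ((innerSL ℝ (u j)).smulRight (z j) : E2 j →L[ℝ] E2 j).toLinearMap
        else LinearMap.id) else 0)
    (fun j w => by
      split_ifs
      · simp only [ContinuousLinearMap.coe_coe, ContinuousLinearMap.smulRight_apply,
          innerSL_apply_apply, norm_smul]
        have h1 := norm_inner_le_norm (𝕜 := ℝ) (u j) w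
        have h2 : ‖u j‖ * ‖w‖ ≤ 1 * ‖w‖ := mul_le_mul_of_nonneg_right (hu j) (norm_nonneg _)
        have h3 := mul_le_mul_of_nonneg_left (hz j) (norm_nonneg (inner ℝ (u j) w))
        linarith
      · simp
      · simp)

lemma ev_rot (A : Finset ℕ) (B : Set ℕ) [DecidablePred (· ∈ B)] (u z : ∀ j, E2 j)
    (hu : ∀ j, ‖u j‖ ≤ 1) (hz : ∀ j, ‖z j‖ ≤ 1) (x : c0E2) (j : ℕ) :
    ev j (rot A B u z hu hz x) =
      if j ∈ A then (if j ∈ B then (inner ℝ (u j) (ev j x)) • z j else ev j x) else 0 := by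
  rw [rot, ev_diag]
  split_ifs <;> simp

lemma norm_rot_le (A : Finset ℕ) (B : Set ℕ) [DecidablePred (· ∈ B)] (u z : ∀ j, E2 j)
    (hu : ∀ j, ‖u j‖ ≤ 1) (hz : ∀ j, ‖z j‖ ≤ 1) (x : c0E2) :
    ‖rot A B u z hu hz x‖ ≤ ‖x‖ := norm_diag_le _ _ _

lemma euclid {j : ℕ} (p q : E2 j) {ε : ℝ} (hε : 0 < ε) (hp : ‖p‖ ≤ 1) (hq : ‖q‖ ≤ 1)
    (h1 : ε ≤ 1) (h : 1 - ε ^ 2 / 32 ≤ ‖(1 / 2 : ℝ) • (p + q)‖) : ‖q - p‖ ≤ ε / 2 := by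
  have hpar := parallelogram_law_with_norm ℝ p q
  rw [norm_smul] at h
  norm_num at h
  rw [norm_sub_rev]
  have hs : 0 ≤ ‖p + q‖ := norm_nonneg _
  have hp0 := norm_nonneg p
  have hq0 := norm_nonneg q
  have h0 : 0 < 1 - ε ^ 2 / 32 := by nlinarith
  have h2 : (2 * (1 - ε ^ 2 / 32)) ^ 2 ≤ ‖p + q‖ ^ 2 := pow_le_pow_left₀ (by linarith) (by linarith) 2
  have hp2 : ‖p‖ * ‖p‖ ≤ 1 := by nlinarith
  have hq2 : ‖q‖ * ‖q‖ ≤ 1 := by nlinarith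
  refine abs_le_of_sq_le_sq' ?_ (by linarith) |>.2
  nlinarith [sq_nonneg (ε ^ 2)]

lemma rescale {X Y : Type*} [NormedAddCommGroup X] [NormedSpace ℝ X]
    [NormedAddCommGroup Y] [NormedSpace ℝ Y] (S₀ T : X →L[ℝ] Y) (v : X) {M γ : ℝ}
    (hM0 : 0 < M) (hS₀eq : ‖S₀‖ = M) (hS₀v : ‖S₀ v‖ = M) (hMabs : |M - 1| ≤ γ) :
    ∃ S : X →L[ℝ] Y, ‖S‖ = 1 ∧ ‖S v‖ = 1 ∧ ‖S - T‖ ≤ γ + ‖S₀ - T‖ := by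
  have hSS : ‖M⁻¹ • S₀ - S₀‖ ≤ γ := by
    have h1 : M⁻¹ • S₀ - S₀ = (M⁻¹ * (1 - M)) • S₀ := by
      rw [mul_sub, mul_one, inv_mul_cancel₀ hM0.ne', sub_smul, one_smul]
    rw [h1, norm_smul, hS₀eq, norm_mul, norm_inv, Real.norm_eq_abs, Real.norm_eq_abs,
      abs_of_pos hM0, abs_sub_comm]
    have : M⁻¹ * |M - 1| * M = |M - 1| := by field_simp
    rw [this]
    exact hMabs
  refine ⟨M⁻¹ • S₀, ?_, ?_, ?_⟩
  · rw [norm_smul, hS₀eq, norm_inv, Real.norm_eq_abs, abs_of_pos hM0, inv_mul_cancel₀ hM0.ne']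
  · rw [smul_apply, norm_smul, hS₀v, norm_inv, Real.norm_eq_abs,
      abs_of_pos hM0, inv_mul_cancel₀ hM0.ne']
  · have h1 : M⁻¹ • S₀ - T = (M⁻¹ • S₀ - S₀) + (S₀ - T) := by abel
    rw [h1]
    refine (norm_add_le _ _).trans ?_
    linarith

set_option maxHeartbeats 2000000 in
lemma main (Y : Type*) [NormedAddCommGroup Y] [NormedSpace ℝ Y]
    [UniformConvexSpace Y] {ε : ℝ} (hε : 0 < ε) (hε1 : ε ≤ 1) :
    ∃ η : ℝ, 0 < η ∧
    ∀ (T : c0E2 →L[ℝ] Y) (x₀ : c0E2), ‖T‖ = 1 → ‖x₀‖ = 1 → 1 - η < ‖T x₀‖ →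
      ∃ (u₀ : c0E2) (S : c0E2 →L[ℝ] Y),
        ‖u₀‖ = 1 ∧ ‖S‖ = 1 ∧ ‖S u₀‖ = 1 ∧ ‖u₀ - x₀‖ < ε ∧ ‖S - T‖ < ε := by
  classical
  obtain ⟨δ₂, hδ₂, K2⟩ := key Y (show 0 < ε ^ 2 / 32 by positivity) (show 0 < ε / 16 by positivity)
  obtain ⟨κ, hκ, hκδ, hκ1⟩ : ∃ κ : ℝ, 0 < κ ∧ κ < δ₂ ∧ κ ≤ 1 / 2 :=
    ⟨min (δ₂ / 2) (1 / 2), by positivity, (min_le_left _ _).trans_lt (by linarith),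
      min_le_right _ _⟩
  obtain ⟨a, ha, haε, haκ⟩ : ∃ a : ℝ, 0 < a ∧ a ≤ ε / 8 ∧ a ≤ ε / 8 * κ / 4 :=
    ⟨min (ε / 8) (ε / 8 * κ / 4), by positivity, min_le_left _ _, min_le_right _ _⟩
  obtain ⟨δ₁, hδ₁, K1⟩ := key Y (show 0 < ε / 2 by positivity) ha
  obtain ⟨η, hη, hηδ, hηκ⟩ : ∃ η : ℝ, 0 < η ∧ η ≤ δ₁ ∧ η ≤ ε / 8 * κ / 4 :=
    ⟨min δ₁ (ε / 8 * κ / 4), by positivity, min_le_left _ _, min_le_right _ _⟩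
  set γ : ℝ := ε / 8 with hγ
  have hγ0 : 0 < γ := by positivity
  have hγ1 : γ ≤ 1 / 8 := by rw [hγ]; linarith
  have hγκ : γ * κ ≤ γ / 2 := by nlinarith
  refine ⟨η, hη, fun T x₀ hT hx₀ hTx => ?_⟩
  -- the finite set of large blocks
  have hfin : {i : ℕ | 1 - ε / 2 ≤ ‖ev i x₀‖}.Finite := by
    have h := (tendsto_ev x₀).eventually (gt_mem_nhds (show (0:ℝ) < 1 - ε / 2 by linarith))
    obtain ⟨N, hN⟩ := eventually_atTop.1 h
    refine (Set.finite_lt_nat N).subset fun i hi => ?_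
    by_contra hlt
    simp only [Set.mem_setOf_eq, not_lt] at hi hlt
    exact absurd (hN i hlt) (not_lt.2 hi)
  set A : Finset ℕ := hfin.toFinset with hA
  have memA : ∀ i, i ∈ A ↔ 1 - ε / 2 ≤ ‖ev i x₀‖ := fun i => by simp [hA]
  have hx₀j : ∀ j, ‖ev j x₀‖ ≤ 1 := fun j => hx₀ ▸ norm_ev_le x₀ j
  have hTA : ∀ x : c0E2, ‖T (x - proj A x)‖ ≤ a * ‖x‖ := by
    intro x
    refine (K1 T x₀ hT.le hx₀.le (by linarith) (x - proj A x) ?_).trans ?_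
    · intro i hi
      rw [map_sub, ev_proj, if_pos ((memA i).2 hi), sub_self]
    · gcongr
      refine norm_le_of _ (norm_nonneg _) fun j => ?_
      rw [map_sub, ev_proj]
      split_ifs
      · rw [sub_self, norm_zero]
        exact norm_nonneg _
      · rw [sub_zero]
        exact norm_ev_le x j
  -- the functional
  have hc0 : 0 < ‖T x₀‖ := by nlinarith
  obtain ⟨g, hg1, hgx⟩ := exists_dual_vector ℝ (T x₀) hc0.ne'
  simp only [RCLike.ofReal_real_eq_id, id] at hgx
  set y₀ : Y := ‖T x₀‖⁻¹ • T x₀ with hy₀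
  have hy₀n : ‖y₀‖ = 1 := by
    rw [hy₀, norm_smul, norm_inv, norm_norm, inv_mul_cancel₀ hc0.ne']
  have hgy₀ : g y₀ = 1 := by
    rw [hy₀, map_smul, hgx, smul_eq_mul, inv_mul_cancel₀ hc0.ne']
  have hgle : ∀ y, |g y| ≤ ‖y‖ := fun y => by
    have := g.le_of_opNorm_le hg1.le y
    rwa [one_mul, Real.norm_eq_abs] at this
  set Q : c0E2 →L[ℝ] Y := T + γ • (g.comp T).smulRight y₀ with hQ
  have Qapp : ∀ x, Q x = T x + (γ * g (T x)) • y₀ := fun x => by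
    simp [hQ, smul_smul]
  have gQ : ∀ x, g (Q x) = (1 + γ) * g (T x) := fun x => by
    rw [Qapp, map_add, map_smul, hgy₀, smul_eq_mul]; ring
  have Qle : ∀ x, ‖Q x‖ ≤ ‖T x‖ + γ * |g (T x)| := fun x => by
    rw [Qapp]
    refine (norm_add_le _ _).trans ?_
    rw [norm_smul, hy₀n, Real.norm_eq_abs, abs_mul, abs_of_pos hγ0, mul_one]
  have Qle2 : ∀ x, ‖Q x‖ ≤ 2 * ‖T x‖ := fun x => by
    have := Qle x
    have := hgle (T x)
    nlinarith [norm_nonneg (T x)]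
  obtain ⟨z, hz1, hzA, hzmax, hgz⟩ : ∃ z : c0E2, ‖z‖ ≤ 1 ∧ (∀ j ∉ A, ev j z = 0) ∧
      (∀ x : c0E2, ‖x‖ ≤ 1 → (∀ j ∉ A, ev j x = 0) → ‖Q x‖ ≤ ‖Q z‖) ∧ 0 ≤ g (T z) := by
    obtain ⟨z, h1, h2, h3⟩ := exists_max A Q
    rcases le_total 0 (g (T z)) with h | h
    · exact ⟨z, h1, h2, h3, h⟩
    · refine ⟨-z, by rwa [norm_neg], fun j hj => by rw [map_neg, h2 j hj, neg_zero], ?_, ?_⟩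
      · intro x hx hxA
        rw [map_neg, norm_neg]
        exact h3 x hx hxA
      · rw [map_neg, map_neg]; linarith
  have hTle : ∀ x, ‖T x‖ ≤ ‖x‖ := fun x => by
    have := T.le_of_opNorm_le hT.le x
    rwa [one_mul] at this
  have hzj : ∀ j, ‖ev j z‖ ≤ 1 := fun j => (norm_ev_le z j).trans hz1
  set M : ℝ := ‖Q z‖ with hM
  -- lower bound on M
  have hgP : 1 - η - a ≤ g (T (proj A x₀)) := by
    have h1 := hgle (T (x₀ - proj A x₀))
    have h2 := hTA x₀
    rw [hx₀] at h2
    have h3 := (abs_le.1 h1).2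
    rw [map_sub, map_sub, hgx] at h3
    rw [map_sub] at h2
    linarith
  have hMlow : (1 + γ) * (1 - η - a) ≤ M := by
    have h1 := hzmax (proj A x₀) (hx₀ ▸ norm_proj_le A x₀)
      (fun j hj => by rw [ev_proj, if_neg hj])
    have h2 := (abs_le.1 (hgle (Q (proj A x₀)))).2
    rw [gQ] at h2
    nlinarith
  have hMup : M ≤ 1 + γ * g (T z) := by
    have h1 := Qle z
    rw [abs_of_nonneg hgz] at h1
    have := hTle z
    linarith
  have hgz1 : g (T z) ≤ 1 := by
    have := (abs_le.1 (hgle (T z))).2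
    have := hTle z
    linarith
  have hsum : (1 + γ) * (η + a) ≤ γ * κ := by nlinarith
  have hM0 : 0 < M := by nlinarith
  have hMabs : |M - 1| ≤ γ := abs_le.2 ⟨by nlinarith, by nlinarith⟩
  have hgzlow : 1 - κ ≤ g (T z) := by
    have : γ * (1 - κ) ≤ γ * g (T z) := by nlinarith
    exact le_of_mul_le_mul_left this hγ0
  -- midpoint
  set m : c0E2 := (1 / 2 : ℝ) • (x₀ + z) with hm
  have hm1 : ‖m‖ ≤ 1 := by
    rw [hm, norm_smul]
    have := norm_add_le x₀ z
    rw [Real.norm_eq_abs, abs_of_pos (by norm_num)]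
    linarith
  have hTm : 1 - δ₂ < ‖T m‖ := by
    have h1 := (abs_le.1 (hgle (T m))).2
    have h2 : g (T m) = 1 / 2 * (‖T x₀‖ + g (T z)) := by
      rw [hm, map_smul, map_smul, map_add, map_add, hgx, smul_eq_mul]
    have h3 : η ≤ κ := by nlinarith
    linarith
  have K2' := K2 T m hT.le hm1 hTm
  set B : Set ℕ := {i | ‖ev i m‖ < 1 - ε ^ 2 / 32} with hB
  set u : ∀ j, E2 j := fun j => ‖ev j x₀‖⁻¹ • ev j x₀ with hu
  have hu1 : ∀ j, ‖u j‖ ≤ 1 := fun j => by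
    rw [hu]
    simp only [norm_smul, norm_inv, norm_norm]
    exact inv_mul_le_one
  have hAne : ∀ j ∈ A, 0 < ‖ev j x₀‖ := fun j hj => by
    have := (memA j).1 hj
    linarith
  have huA : ∀ j ∈ A, ‖u j‖ = 1 := fun j hj => by
    rw [hu]
    simp only [norm_smul, norm_inv, norm_norm]
    exact inv_mul_cancel₀ (hAne j hj).ne'
  set R := rot A B u (fun j => ev j z) hu1 hzj with hR
  have Rle : ∀ x, ‖R x‖ ≤ ‖x‖ := fun x => norm_rot_le _ _ _ _ _ _ x
  have RA : ∀ x, ∀ j ∉ A, ev j (R x) = 0 := fun x j hj => by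
    rw [hR, ev_rot, if_neg hj]
  set vf : ∀ j, E2 j := fun j =>
    if j ∈ A then (if j ∈ B then u j else ev j z) else ev j x₀ with hvf
  have hvt : Tendsto (fun j => ‖vf j‖) atTop (𝓝 0) := by
    refine (tendsto_ev x₀).congr' ?_
    filter_upwards [eventually_gt_atTop (A.sup id)] with j hj
    have : j ∉ A := fun hjA => absurd (Finset.le_sup (f := id) hjA) (not_le.2 hj)
    simp only [hvf, if_neg this]
  set v : c0E2 := mk vf hvt with hv
  have evv : ∀ j, ev j v = if j ∈ A then (if j ∈ B then u j else ev j z) else ev j x₀ :=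
    fun j => rfl
  have hv1 : ‖v‖ ≤ 1 := by
    refine norm_le_of _ zero_le_one fun j => ?_
    rw [evv]
    split_ifs
    · exact hu1 j
    · exact hzj j
    · exact hx₀j j
  have hRv : R v = z := by
    apply ext_ev
    intro j
    rw [hR, ev_rot, evv]
    by_cases hjA : j ∈ A
    · by_cases hjB : j ∈ B
      · simp only [if_pos hjA, if_pos hjB]
        rw [real_inner_self_eq_norm_sq, huA j hjA]
        simp
      · simp only [if_pos hjA, if_neg hjB]
    · simp only [if_neg hjA]
      exact (hzA j hjA).symm
  have hvx : ‖v - x₀‖ ≤ ε / 2 := by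
    refine norm_le_of _ (by positivity) fun j => ?_
    rw [map_sub, evv]
    split_ifs with hjA hjB
    · have h1 : u j - ev j x₀ = (1 - ‖ev j x₀‖) • u j := by
        rw [sub_smul, one_smul, hu]
        simp only [smul_smul]
        rw [mul_inv_cancel₀ (hAne j hjA).ne', one_smul]
      rw [h1, norm_smul, huA j hjA, mul_one, Real.norm_eq_abs,
        abs_of_nonneg (by linarith [hx₀j j])]
      have := (memA j).1 hjA
      linarith
    · refine euclid (ev j x₀) (ev j z) hε (hx₀j j) (hzj j) hε1 ?_
      have : ¬ ‖ev j m‖ < 1 - ε ^ 2 / 32 := hjB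
      rw [hm, map_smul, map_add] at this
      exact not_lt.1 this
    · simp; positivity
  -- the operator
  have QRle : ∀ x, ‖Q (R x)‖ ≤ M * ‖x‖ := by
    intro x
    by_cases hx : x = 0
    · simp [hx]
    have hxn : 0 < ‖x‖ := norm_pos_iff.2 hx
    have h1 := hzmax (R (‖x‖⁻¹ • x)) ((Rle _).trans (by
      rw [norm_smul, norm_inv, norm_norm, inv_mul_cancel₀ hxn.ne'])) (RA _)
    rw [map_smul, map_smul, norm_smul, norm_inv, norm_norm, inv_mul_le_iff₀ hxn] at h1
    linarith
  set S₀ : c0E2 →L[ℝ] Y := Q.comp R with hS₀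
  have S₀app : ∀ x, S₀ x = Q (R x) := fun x => rfl
  have hS₀v : ‖S₀ v‖ = M := by rw [S₀app, hRv]
  have hS₀n : ‖S₀‖ ≤ M := S₀.opNorm_le_bound hM0.le QRle
  have hS₀ge : M ≤ ‖S₀‖ * ‖v‖ := hS₀v ▸ S₀.le_opNorm v
  have hvn : ‖v‖ = 1 := by
    refine le_antisymm hv1 ?_
    by_contra hlt
    push Not at hlt
    nlinarith [norm_nonneg v]
  have hS₀eq : ‖S₀‖ = M := by
    rw [hvn, mul_one] at hS₀ge
    exact le_antisymm hS₀n hS₀ge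
  have hdiff : ‖S₀ - T‖ ≤ a + γ + ε / 4 := by
    refine ContinuousLinearMap.opNorm_le_bound _ (by positivity) fun x => ?_
    have hsplit : (S₀ - T) x = -T (x - proj A x) + (γ * g (T (proj A x))) • y₀
        - Q (proj A x - R x) := by
      rw [map_sub Q, Qapp (proj A x), sub_apply, S₀app, map_sub T]
      abel
    have hp := norm_proj_le A x
    have n1 := hTA x
    have n2 : ‖(γ * g (T (proj A x))) • y₀‖ ≤ γ * ‖x‖ := by
      rw [norm_smul, hy₀n, mul_one, Real.norm_eq_abs, abs_mul, abs_of_pos hγ0]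
      have := hgle (T (proj A x))
      have := hTle (proj A x)
      exact mul_le_mul_of_nonneg_left (by linarith) hγ0.le
    have n3 : ‖Q (proj A x - R x)‖ ≤ ε / 4 * ‖x‖ := by
      have h1 := K2' (proj A x - R x) (fun i hi => by
        have hiB : i ∉ B := not_lt.2 hi
        rw [map_sub, ev_proj, hR, ev_rot]
        simp only [if_neg hiB, sub_self])
      have h2 := Qle2 (proj A x - R x)
      have h3 := norm_sub_le (proj A x) (R x)
      have h4 := Rle x
      have h5 : ε / 16 * ‖proj A x - R x‖ ≤ ε / 16 * (2 * ‖x‖) :=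
        mul_le_mul_of_nonneg_left (by linarith) (by positivity)
      linarith
    rw [hsplit]
    refine (norm_sub_le _ _).trans ?_
    have := norm_add_le (-T (x - proj A x)) ((γ * g (T (proj A x))) • y₀)
    rw [norm_neg] at this
    linarith
  obtain ⟨S, hS1, hS2, hS3⟩ := rescale S₀ T v hM0 hS₀eq hS₀v hMabs
  exact ⟨v, S, hvn, hS1, hS2, by linarith, by linarith⟩

end C0Aux

/-- Theorem 6, the main theorem of the paper. If `Y` is a uniformly convex
Banach space, then the pair `(c₀(⊕ₙ ℓ₂ⁿ), Y)` has the Bishop–Phelps–Bollobás property for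
operators. -/
theorem stmt7 (Y : Type*) [NormedAddCommGroup Y] [NormedSpace ℝ Y]
    [UniformConvexSpace Y] [CompleteSpace Y] :
    HasBPBp c0E2 Y := by
  intro ε hε
  obtain ⟨η, hη, H⟩ := C0Aux.main Y (ε := min ε 1) (by positivity) (min_le_right _ _)
  refine ⟨η, hη, fun T x₀ hT hx hTx => ?_⟩
  obtain ⟨u, S, h1, h2, h3, h4, h5⟩ := H T x₀ hT hx hTx
  exact ⟨u, S, h1, h2, h3, h4.trans_le (min_le_left _ _), h5.trans_le (min_le_left _ _)⟩
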